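/- arXiv:1301.1064 — 4 statements merged into one kernel-verified Lean document; each statement's English description precedes it below -/
import Mathlib

section
/- Let r > 0, m > 0, let θ, φ : ℝ → ℝ be twice differentiable, and let F : ℝ → ℝ³ be a force function such that Newton's law m·p''(t) = F(t) + λ(t)·e_LD(t) holds for some scalar function λ (the line tension acts along the local down direction), where p(t) = r·(cos φ(t) cos θ(t), sin φ(t) cos θ(t), sin θ(t)). Then at every t with cos θ(t) ≠ 0: θ''(t) = ⟨F(t), e_LN(t)⟩/(r m) − sin θ(t) cos θ(t) φ'(t)², and φ''(t) = ⟨F(t), e_LE(t)⟩/(r m cos θ(t)) + 2 tan θ(t) θ'(t) φ'(t), where ⟨·,·⟩ is the Euclidean inner product. -/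
open Real Matrix

/-!
Differentiating `p = -r • e_LD` twice and expanding in the orthonormal moving frame gives
`p'' = r • ((θ'' + sin θ cos θ φ'²) e_LN + (cos θ φ'' - 2 sin θ θ' φ') e_LE
+ (θ'² + cos² θ φ'²) e_LD)` (the lemmas `hasDerivAt_position` and `hasDerivAt_velocity`, stated in
Cartesian coordinates). Pairing Newton's law with `e_LN` and `e_LE` eliminates the tension, which
is orthogonal to both, and the resulting two scalar equations are solved for `θ''` and `φ''`.
-/

lemma hasDerivAt_vec3 {f g h : ℝ → ℝ} {a b c t : ℝ} (hf : HasDerivAt f a t)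
    (hg : HasDerivAt g b t) (hh : HasDerivAt h c t) :
    HasDerivAt (fun s => ![f s, g s, h s]) ![a, b, c] t := by
  rw [hasDerivAt_pi]
  intro i
  fin_cases i
  · exact hf
  · exact hg
  · exact hh

lemma hasDerivAt_position (r : ℝ) {θ φ : ℝ → ℝ} {a b t : ℝ}
    (hθ : HasDerivAt θ a t) (hφ : HasDerivAt φ b t) :
    HasDerivAt (fun s => ![r * cos (φ s) * cos (θ s), r * sin (φ s) * cos (θ s), r * sin (θ s)])
      ![r * (-(sin (φ t) * cos (θ t) * b) - cos (φ t) * sin (θ t) * a),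
        r * (cos (φ t) * cos (θ t) * b - sin (φ t) * sin (θ t) * a),
        r * (cos (θ t) * a)] t := by
  refine hasDerivAt_vec3 ?_ ?_ ?_
  · exact ((hφ.cos.const_mul r).mul hθ.cos).congr_deriv (by ring)
  · exact ((hφ.sin.const_mul r).mul hθ.cos).congr_deriv (by ring)
  · exact hθ.sin.const_mul r

/-- The acceleration; `u` and `v` play the roles of `θ'` and `φ'`, with derivatives `a` and `b`. -/
lemma hasDerivAt_velocity (r : ℝ) {θ φ u v : ℝ → ℝ} {a b t : ℝ}
    (hθ : HasDerivAt θ (u t) t) (hφ : HasDerivAt φ (v t) t)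
    (hu : HasDerivAt u a t) (hv : HasDerivAt v b t) :
    HasDerivAt (fun s =>
      ![r * (-(sin (φ s) * cos (θ s) * v s) - cos (φ s) * sin (θ s) * u s),
        r * (cos (φ s) * cos (θ s) * v s - sin (φ s) * sin (θ s) * u s),
        r * (cos (θ s) * u s)])
      ![r * (-(cos (φ t) * cos (θ t) * (u t ^ 2 + v t ^ 2)) + 2 * sin (φ t) * sin (θ t) * u t * v t
          - sin (φ t) * cos (θ t) * b - cos (φ t) * sin (θ t) * a),
        r * (-(sin (φ t) * cos (θ t) * (u t ^ 2 + v t ^ 2)) - 2 * cos (φ t) * sin (θ t) * u t * v t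
          + cos (φ t) * cos (θ t) * b - sin (φ t) * sin (θ t) * a),
        r * (cos (θ t) * a - sin (θ t) * u t ^ 2)] t := by
  refine hasDerivAt_vec3 ?_ ?_ ?_
  · exact ((((hφ.sin.mul hθ.cos).mul hv).neg.sub ((hφ.cos.mul hθ.sin).mul hu)).const_mul
      r).congr_deriv (by simp only [Pi.mul_apply]; ring)
  · exact ((((hφ.cos.mul hθ.cos).mul hv).sub ((hφ.sin.mul hθ.sin).mul hu)).const_mul
      r).congr_deriv (by simp only [Pi.mul_apply]; ring)
  · exact ((hθ.cos.mul hu).const_mul r).congr_deriv (by ring)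

/-- equations of motion in spherical coordinates from Newton's law,
with line tension along the local down direction. -/
theorem equations_of_motion_spherical
    (r m : ℝ) (hr : 0 < r) (hm : 0 < m)
    (θ φ : ℝ → ℝ)
    (hθ : Differentiable ℝ θ) (hθ' : Differentiable ℝ (deriv θ))
    (hφ : Differentiable ℝ φ) (hφ' : Differentiable ℝ (deriv φ))
    (F : ℝ → Fin 3 → ℝ) (lam : ℝ → ℝ)
    (p : ℝ → Fin 3 → ℝ)
    (hp : p = fun t => ![r * cos (φ t) * cos (θ t),
                         r * sin (φ t) * cos (θ t),
                         r * sin (θ t)])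
    (eLN : ℝ → Fin 3 → ℝ)
    (heLN : eLN = fun t => ![-(cos (φ t)) * sin (θ t),
                             -(sin (φ t)) * sin (θ t),
                             cos (θ t)])
    (eLE : ℝ → Fin 3 → ℝ)
    (heLE : eLE = fun t => ![-(sin (φ t)), cos (φ t), 0])
    (eLD : ℝ → Fin 3 → ℝ)
    (heLD : eLD = fun t => ![-(cos (φ t)) * cos (θ t),
                             -(sin (φ t)) * cos (θ t),
                             -(sin (θ t))])
    (hNewton : ∀ t : ℝ, m • deriv (deriv p) t = F t + lam t • eLD t) :
    ∀ t : ℝ, cos (θ t) ≠ 0 →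
      deriv (deriv θ) t
        = (F t ⬝ᵥ eLN t) / (r * m) - sin (θ t) * cos (θ t) * (deriv φ t) ^ 2 ∧
      deriv (deriv φ) t
        = (F t ⬝ᵥ eLE t) / (r * m * cos (θ t)) + 2 * tan (θ t) * deriv θ t * deriv φ t := by
  intro t hc
  have hvel : deriv p = fun s =>
      ![r * (-(sin (φ s) * cos (θ s) * deriv φ s) - cos (φ s) * sin (θ s) * deriv θ s),
        r * (cos (φ s) * cos (θ s) * deriv φ s - sin (φ s) * sin (θ s) * deriv θ s),
        r * (cos (θ s) * deriv θ s)] := by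
    funext s
    rw [hp]
    exact (hasDerivAt_position r (hθ s).hasDerivAt (hφ s).hasDerivAt).deriv
  have hN := hNewton t
  rw [hvel, (hasDerivAt_velocity r (hθ t).hasDerivAt (hφ t).hasDerivAt
    (hθ' t).hasDerivAt (hφ' t).hasDerivAt).deriv, heLD] at hN
  have h0 := congrFun hN 0
  have h1 := congrFun hN 1
  have h2 := congrFun hN 2
  simp only [Pi.smul_apply, Pi.add_apply, smul_eq_mul, Matrix.cons_val] at h0 h1 h2
  have sφ := sin_sq_add_cos_sq (φ t)
  have sθ := sin_sq_add_cos_sq (θ t)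
  have dN : F t ⬝ᵥ eLN t
      = r * m * (deriv (deriv θ) t + sin (θ t) * cos (θ t) * deriv φ t ^ 2) := by
    rw [heLN]
    simp only [dotProduct, Fin.sum_univ_three, Matrix.cons_val]
    replace h0 := sub_eq_of_eq_add h0
    replace h1 := sub_eq_of_eq_add h1
    replace h2 := sub_eq_of_eq_add h2
    rw [← h0, ← h1, ← h2]
    linear_combination (m * r * (sin (θ t) * cos (θ t) * (deriv θ t ^ 2 + deriv φ t ^ 2)
      + sin (θ t) ^ 2 * deriv (deriv θ) t) - lam t * cos (θ t) * sin (θ t)) * sφ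
      + m * r * deriv (deriv θ) t * sθ
  have dE : F t ⬝ᵥ eLE t
      = r * m * (cos (θ t) * deriv (deriv φ) t - 2 * sin (θ t) * deriv θ t * deriv φ t) := by
    rw [heLE]
    simp only [dotProduct, Fin.sum_univ_three, Matrix.cons_val]
    replace h0 := sub_eq_of_eq_add h0
    replace h1 := sub_eq_of_eq_add h1
    rw [← h0, ← h1]
    linear_combination (m * r * (cos (θ t) * deriv (deriv φ) t
      - 2 * sin (θ t) * deriv θ t * deriv φ t)) * sφ
  rw [dN, dE, tan_eq_sin_div_cos]
  constructor
  · field_simp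
    ring
  · field_simp
    ring
end

section
/- Let r, m, ρ, A, g > 0 and let C_L, C_Deq, Δα, ψ, W : ℝ → ℝ be functions (lift coefficient, equivalent drag coefficient, relative-wind inclination, roll angle, effective wind magnitude). Let θ, φ : ℝ → ℝ be twice differentiable with cos θ(t) ≠ 0 and V(t) := √(cos²θ φ'² + θ'²) > 0, and let γ : ℝ → ℝ be differentiable with cos γ = θ'/V and sin γ = cos θ φ'/V. Suppose the equations of motion θ'' = F_N/(r m) − sin θ cos θ φ'² and φ'' = F_E/(r m cos θ) + 2 tan θ θ' φ' hold, where the local-north and local-east force components are F_N = (1/2)ρ C_L A W² (Δα cos γ − (Δα² ψ + ψ) sin γ) − (1/2)ρ C_Deq A W² cos γ − m g cos θ and F_E = (1/2)ρ C_L A W² (Δα sin γ + (Δα² ψ + ψ) cos γ) − (1/2)ρ C_Deq A W² sin γ. Then for all t: γ' = [ (1/2)ρ C_L A W²/(r m) ] · (θ' cos γ + cos θ φ' sin γ)/(cos²θ φ'² + θ'²) · (Δα² + 1) ψ + (1/2)ρ A W² (C_L Δα − C_Deq)(θ' sin γ − cos θ φ' cos γ)/( r m (cos²θ φ'² + θ'²)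 ) + sin θ · φ' + g cos²θ φ' / ( r (cos²θ φ'² + θ'²) ). -/
open Real

/-!
Write `p = θ'` and `q = cos θ φ'`, so that `(p, q) = V (cos γ, sin γ)`. The identity
`p sin γ = q cos γ` holds at all times; differentiating it gives the planar polar-angle formula
`γ' V² = p q' - q p'` without having to differentiate `V`. The equations of motion give
`q' = F_E / (r m) + sin θ θ' φ'` and `p' = F_N / (r m) - sin θ cos θ φ'²`; hence
`p q' - q p' = (p F_E - q F_N) / (r m) + sin θ φ' V²`, and inserting the forces yields the claim.
-/

/-- The polar-angle formula `γ' V² = p q' - q p'`, in terms of the values at one time: `c`, `s`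
are the cosine and sine of the angle, `w` its rate, and `key` is the differentiated form of
`p sin γ = q cos γ`. -/
lemma rate_of_tangency {V p q p' q' c s w : ℝ} (h1 : s ^ 2 + c ^ 2 = 1)
    (hp : p = V * c) (hq : q = V * s)
    (key : p' * s + p * (c * w) = q' * c - q * (s * w)) :
    w * V ^ 2 = p * q' - q * p' := by
  subst hp hq
  linear_combination V * key - w * V ^ 2 * h1

/-- expression of the velocity angle rate under the simplified
aerodynamic force and the equations of motion. -/
theorem velocity_angle_rate_aero
    (r m ρ A g : ℝ) (hr : 0 < r) (hm : 0 < m) (hρ : 0 < ρ) (hA : 0 < A) (hg : 0 < g)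
    (CL CDeq Δα ψ W : ℝ → ℝ)
    (θ φ γ : ℝ → ℝ)
    (hθ : Differentiable ℝ θ) (hθ' : Differentiable ℝ (deriv θ))
    (hφ : Differentiable ℝ φ) (hφ' : Differentiable ℝ (deriv φ))
    (hcosθ : ∀ t, cos (θ t) ≠ 0)
    (V : ℝ → ℝ)
    (hV : V = fun t => Real.sqrt (cos (θ t) ^ 2 * (deriv φ t) ^ 2 + (deriv θ t) ^ 2))
    (hVpos : ∀ t, 0 < V t)
    (hγ : Differentiable ℝ γ)
    (hcos : ∀ t, cos (γ t) = deriv θ t / V t)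
    (hsin : ∀ t, sin (γ t) = cos (θ t) * deriv φ t / V t)
    (FN FE : ℝ → ℝ)
    (hFN : FN = fun t =>
      (1/2) * ρ * CL t * A * (W t) ^ 2
          * (Δα t * cos (γ t) - ((Δα t) ^ 2 * ψ t + ψ t) * sin (γ t))
        - (1/2) * ρ * CDeq t * A * (W t) ^ 2 * cos (γ t)
        - m * g * cos (θ t))
    (hFE : FE = fun t =>
      (1/2) * ρ * CL t * A * (W t) ^ 2
          * (Δα t * sin (γ t) + ((Δα t) ^ 2 * ψ t + ψ t) * cos (γ t))
        - (1/2) * ρ * CDeq t * A * (W t) ^ 2 * sin (γ t))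
    (hEOMθ : ∀ t, deriv (deriv θ) t
        = FN t / (r * m) - sin (θ t) * cos (θ t) * (deriv φ t) ^ 2)
    (hEOMφ : ∀ t, deriv (deriv φ) t
        = FE t / (r * m * cos (θ t)) + 2 * tan (θ t) * deriv θ t * deriv φ t) :
    ∀ t : ℝ,
      deriv γ t =
        ((1/2) * ρ * CL t * A * (W t) ^ 2 / (r * m))
            * ((deriv θ t * cos (γ t) + cos (θ t) * deriv φ t * sin (γ t))
                / (cos (θ t) ^ 2 * (deriv φ t) ^ 2 + (deriv θ t) ^ 2))
            * ((Δα t) ^ 2 + 1) * ψ t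
        + (1/2) * ρ * A * (W t) ^ 2 * (CL t * Δα t - CDeq t)
            * (deriv θ t * sin (γ t) - cos (θ t) * deriv φ t * cos (γ t))
            / (r * m * (cos (θ t) ^ 2 * (deriv φ t) ^ 2 + (deriv θ t) ^ 2))
        + sin (θ t) * deriv φ t
        + g * cos (θ t) ^ 2 * deriv φ t
            / (r * (cos (θ t) ^ 2 * (deriv φ t) ^ 2 + (deriv θ t) ^ 2)) := by
  intro t
  have hSnn : 0 ≤ cos (θ t) ^ 2 * (deriv φ t) ^ 2 + (deriv θ t) ^ 2 := by positivity
  have hVsq : V t ^ 2 = cos (θ t) ^ 2 * (deriv φ t) ^ 2 + (deriv θ t) ^ 2 := by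
    rw [hV]; exact Real.sq_sqrt hSnn
  have hV0 : V t ≠ 0 := (hVpos t).ne'
  have hc : ∀ s, deriv θ s = V s * cos (γ s) := fun s => by
    rw [hcos s, mul_div_cancel₀ _ (hVpos s).ne']
  have hs : ∀ s, cos (θ s) * deriv φ s = V s * sin (γ s) := fun s => by
    rw [hsin s, mul_div_cancel₀ _ (hVpos s).ne']
  have hpq : (fun s => deriv θ s * sin (γ s))
      = fun s => cos (θ s) * deriv φ s * cos (γ s) := by
    funext s; rw [hc s, hs s]; ring
  have dL := (hθ' t).hasDerivAt.mul (hγ t).hasDerivAt.sin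
  have dR := (((hθ t).hasDerivAt.cos).mul (hφ' t).hasDerivAt).mul (hγ t).hasDerivAt.cos
  have key := dL.unique (dR.congr_of_eventuallyEq (.of_eq hpq))
  have hrate := rate_of_tangency (V := V t) (sin_sq_add_cos_sq (γ t)) (hc t) (hs t)
    (p' := deriv (deriv θ) t)
    (q' := -sin (θ t) * deriv θ t * deriv φ t + cos (θ t) * deriv (deriv φ) t)
    (w := deriv γ t) (by simp only [Pi.mul_apply] at key; linear_combination key)
  have hq' : -sin (θ t) * deriv θ t * deriv φ t + cos (θ t) * deriv (deriv φ) t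
      = FE t / (r * m) + sin (θ t) * deriv θ t * deriv φ t := by
    have := hcosθ t
    rw [hEOMφ t, tan_eq_sin_div_cos]
    field_simp
    ring
  rw [hq', hEOMθ t] at hrate
  rw [← hVsq, eq_div_of_mul_eq (pow_ne_zero 2 hV0) hrate, hFN, hFE]
  field_simp
  linear_combination (-2 * r * m * sin (θ t) * deriv φ t) * hVsq
end

section
/- (Proposition 1.) Let r, m, ρ, A, g, d_s > 0, let C_L : ℝ → ℝ be the lift coefficient, E : ℝ → ℝ the equivalent aerodynamic efficiency with E(t) > 0, and δ : ℝ → ℝ the steering input. Let θ, φ : ℝ → ℝ be twice differentiable with cos θ(t) ≠ 0 and V(t) := √(cos²θ φ'² + θ'²) > 0, let |v(t)| := r·V(t), and let γ : ℝ → ℝ be differentiable with cos γ = θ'/V and sin γ = cos θ φ'/V. Suppose: (i) Δα(t) = 1/E(t) and C_Deq(t) = C_L(t)/E(t); (ii) ψ(t) = δ(t)/d_s; (iii) the effective wind magnitude satisfies W(t)² = (1 + 1/E(t)²)·|v(t)|²; (iv) the equations of motion θ'' = F_N/(r m) − sin θ cos θ φ'² and φ'' = F_E/(r m cos θ) + 2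 tan θ θ' φ' hold with F_N = (1/2)ρ C_L A W² (Δα cos γ − (Δα² ψ + ψ) sin γ) − (1/2)ρ C_Deq A W² cos γ − m g cos θ and F_E = (1/2)ρ C_L A W² (Δα sin γ + (Δα² ψ + ψ) cos γ) − (1/2)ρ C_Deq A W² sin γ. Then for all t: γ'(t) = K̃(t)·δ(t) + T̃(t), where K̃(t) = (ρ C_L(t) A)/(2 m d_s) · (1 + 1/E(t)²)² · |v(t)| and T̃(t) = g cos θ(t) sin γ(t)/|v(t)| + sin θ(t)·φ'(t). -/
/-!
The definitions of `cos γ` and `sin γ` say that `(θ', cos θ φ') = V (cos γ, sin γ)`, so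
`sin γ · θ' = cos γ · cos θ φ'` identically in time.  Differentiating this relation, which avoids
differentiating the square root `V`, gives
`V γ' = cos γ (cos θ φ'' - sin θ θ' φ') - sin γ θ''` (`speed_mul_deriv_angle`).
Substituting the equations of motion, the curvature terms combine to `V sin θ φ'` and the forces
enter only through `cos γ F_E - sin γ F_N`.  There the drag and the `Δα` part of the lift drop out,
being parallel to the velocity, and the roll part of the lift and gravity remain.
-/

open Real

/-- For the planar vector `(θ', cos θ φ')` with polar form `V (cos γ, sin γ)`, the component of its
time derivative along `(-sin γ, cos γ)` is `V γ'`. No differentiability of `V` is needed. -/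
lemma speed_mul_deriv_angle {θ φ γ V : ℝ → ℝ}
    (hθ : Differentiable ℝ θ) (hθ' : Differentiable ℝ (deriv θ))
    (hφ' : Differentiable ℝ (deriv φ)) (hγ : Differentiable ℝ γ)
    (hN : ∀ t, deriv θ t = V t * cos (γ t))
    (hE : ∀ t, cos (θ t) * deriv φ t = V t * sin (γ t)) (t : ℝ) :
    V t * deriv γ t =
      cos (γ t) * (cos (θ t) * deriv (deriv φ) t - sin (θ t) * deriv θ t * deriv φ t)
        - sin (γ t) * deriv (deriv θ) t := by
  have hfun : (fun s => sin (γ s)) * deriv θ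
      = (fun s => cos (γ s)) * ((fun s => cos (θ s)) * deriv φ) := by
    funext s
    simp only [Pi.mul_apply]
    rw [hN, hE]
    ring
  have h1 := (hγ t).hasDerivAt.sin.mul (hθ' t).hasDerivAt
  have h2 := (hγ t).hasDerivAt.cos.mul ((hθ t).hasDerivAt.cos.mul (hφ' t).hasDerivAt)
  rw [hfun] at h1
  have h3 := h1.unique h2
  simp only [Pi.mul_apply] at h3
  -- `V = cos γ · θ' + sin γ · cos θ φ'`, the coefficient of `γ'` in `h3`.
  linear_combination h3 - deriv γ t * cos (γ t) * hN t - deriv γ t * sin (γ t) * hE t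
    - V t * deriv γ t * sin_sq_add_cos_sq (γ t)

/-- Proposition 1: the velocity angle dynamics take the form
γ' = K̃ δ + T̃ with K̃ = (ρ C_L A)/(2 m d_s) (1 + 1/E²)² |v| and
T̃ = g cos θ sin γ / |v| + sin θ φ'. -/
theorem proposition_1_velocity_angle_model
    (r m ρ A g ds : ℝ)
    (hr : 0 < r) (hm : 0 < m) (hρ : 0 < ρ) (hA : 0 < A) (hg : 0 < g) (hds : 0 < ds)
    (CL E δ : ℝ → ℝ) (hE : ∀ t, 0 < E t)
    (θ φ γ : ℝ → ℝ)
    (hθ : Differentiable ℝ θ) (hθ' : Differentiable ℝ (deriv θ))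
    (hφ : Differentiable ℝ φ) (hφ' : Differentiable ℝ (deriv φ))
    (hcosθ : ∀ t, cos (θ t) ≠ 0)
    (V : ℝ → ℝ)
    (hV : V = fun t => Real.sqrt (cos (θ t) ^ 2 * (deriv φ t) ^ 2 + (deriv θ t) ^ 2))
    (hVpos : ∀ t, 0 < V t)
    (v : ℝ → ℝ) (hv : v = fun t => r * V t)
    (hγ : Differentiable ℝ γ)
    (hcos : ∀ t, cos (γ t) = deriv θ t / V t)
    (hsin : ∀ t, sin (γ t) = cos (θ t) * deriv φ t / V t)
    -- (i) linearized relative-wind inclination and equivalent drag coefficient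
    (Δα CDeq : ℝ → ℝ)
    (hΔα : ∀ t, Δα t = 1 / E t)
    (hCDeq : ∀ t, CDeq t = CL t / E t)
    -- (ii) linearized roll angle
    (ψ : ℝ → ℝ) (hψ : ∀ t, ψ t = δ t / ds)
    -- (iii) effective wind magnitude
    (W : ℝ → ℝ) (hW : ∀ t, (W t) ^ 2 = (1 + 1 / (E t) ^ 2) * (v t) ^ 2)
    -- (iv) equations of motion with the simplified aerodynamic + gravity force
    (FN FE : ℝ → ℝ)
    (hFN : FN = fun t =>
      (1/2) * ρ * CL t * A * (W t) ^ 2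
          * (Δα t * cos (γ t) - ((Δα t) ^ 2 * ψ t + ψ t) * sin (γ t))
        - (1/2) * ρ * CDeq t * A * (W t) ^ 2 * cos (γ t)
        - m * g * cos (θ t))
    (hFE : FE = fun t =>
      (1/2) * ρ * CL t * A * (W t) ^ 2
          * (Δα t * sin (γ t) + ((Δα t) ^ 2 * ψ t + ψ t) * cos (γ t))
        - (1/2) * ρ * CDeq t * A * (W t) ^ 2 * sin (γ t))
    (hEOMθ : ∀ t, deriv (deriv θ) t
        = FN t / (r * m) - sin (θ t) * cos (θ t) * (deriv φ t) ^ 2)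
    (hEOMφ : ∀ t, deriv (deriv φ) t
        = FE t / (r * m * cos (θ t)) + 2 * tan (θ t) * deriv θ t * deriv φ t) :
    ∀ t : ℝ,
      deriv γ t =
        (ρ * CL t * A / (2 * m * ds)) * (1 + 1 / (E t) ^ 2) ^ 2 * v t * δ t
        + (g * cos (θ t) * sin (γ t) / v t + sin (θ t) * deriv φ t) := by
  intro t
  have hVne : ∀ s, V s ≠ 0 := fun s => (hVpos s).ne'
  have hN : ∀ s, deriv θ s = V s * cos (γ s) := fun s => by
    rw [hcos, mul_div_cancel₀ _ (hVne s)]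
  have hEast : ∀ s, cos (θ s) * deriv φ s = V s * sin (γ s) := fun s => by
    rw [hsin, mul_div_cancel₀ _ (hVne s)]
  have key := speed_mul_deriv_angle hθ hθ' hφ' hγ hN hEast t
  have hφ'' : cos (θ t) * deriv (deriv φ) t
      = FE t / (r * m) + 2 * sin (θ t) * deriv θ t * deriv φ t := by
    have := hcosθ t
    rw [hEOMφ, tan_eq_sin_div_cos]
    field_simp
  have hforce : cos (γ t) * FE t - sin (γ t) * FN t
      = (1/2) * ρ * CL t * A * (1 + 1 / (E t) ^ 2) ^ 2 * (r * V t) ^ 2 * (δ t / ds)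
        + m * g * cos (θ t) * sin (γ t) := by
    simp only [hFE, hFN, hW, hv, hΔα, hCDeq, hψ]
    linear_combination ((1/2) * ρ * CL t * A * (1 + 1 / (E t) ^ 2) ^ 2 * (r * V t) ^ 2
      * (δ t / ds)) * sin_sq_add_cos_sq (γ t)
  have hcurv : cos (γ t) * (sin (θ t) * deriv θ t * deriv φ t)
      + sin (γ t) * (sin (θ t) * cos (θ t) * (deriv φ t) ^ 2) = V t * (sin (θ t) * deriv φ t) := by
    linear_combination cos (γ t) * sin (θ t) * deriv φ t * hN t
      + sin (γ t) * sin (θ t) * deriv φ t * hEast t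
      + V t * sin (θ t) * deriv φ t * sin_sq_add_cos_sq (γ t)
  have hVγ : V t * deriv γ t
      = (cos (γ t) * FE t - sin (γ t) * FN t) / (r * m) + V t * (sin (θ t) * deriv φ t) := by
    rw [key, hφ'', hEOMθ, ← hcurv]
    ring
  rw [hforce] at hVγ
  apply mul_left_cancel₀ (hVne t)
  rw [hVγ]
  simp only [hv]
  have hV0 := hVne t
  have hE0 := (hE t).ne'
  field_simp
  ring
end

section
/- Let K_δ, K_c, ω, ζ ∈ ℝ, define A_cl(K) as the 3×3 real matrix with rows (0, −K·K_δ, 0), (0, 0, 1), (K_c·ω², −ω², −2ζω), let K₁ ≤ K₂, and suppose P ∈ ℝ^{3×3} is symmetric positive definite with A_cl(Kᵢ)ᵀP + P·A_cl(Kᵢ) negative definite for i = 1, 2. Let K : ℝ → ℝ be any function with K(t) ∈ [K₁, K₂] for all t, and let x : ℝ → ℝ³ be differentiable with x'(t) = A_cl(K(t))·x(t). Then the Lyapunov function t ↦ x(t)ᵀ P x(t) is differentiable with derivative x(t)ᵀ(A_cl(K(t))ᵀP + P A_cl(K(t)))x(t), which is strictly negative at every t with x(t) ≠ 0; in particular t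 ↦ x(t)ᵀPx(t) is nonincreasing. -/
/-!
By the product rule the derivative of `xᵀPx` along `x' = Ax` is `xᵀ(AᵀP + PA)x`
(`hasDerivAt_quadratic`). For fixed `x` this value is linear in `A`, and `A_cl` is affine in the
gain, so at a gain in `[K₁, K₂]` it is a convex combination of its values at the two vertices,
both of which are negative for `x ≠ 0`. Since the derivative also vanishes where `x = 0`, it is
nonpositive everywhere, and `xᵀPx` is antitone.
-/

open Matrix

theorem hasDerivAt_quadratic {n : Type*} [Fintype n] (A P : Matrix n n ℝ) {x : ℝ → n → ℝ} {t : ℝ}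
    (hx : HasDerivAt x (A *ᵥ x t) t) :
    HasDerivAt (fun s => x s ⬝ᵥ P *ᵥ x s) (x t ⬝ᵥ (Aᵀ * P + P * A) *ᵥ x t) t := by
  have hPx : HasDerivAt (fun s => P *ᵥ x s) (P *ᵥ (A *ᵥ x t)) t :=
    (LinearMap.toContinuousLinearMap P.mulVecLin).hasFDerivAt.comp_hasDerivAt t hx
  have h : HasDerivAt (fun s => ∑ i, x s i * (P *ᵥ x s) i)
      (∑ i, ((A *ᵥ x t) i * (P *ᵥ x t) i + x t i * (P *ᵥ (A *ᵥ x t)) i)) t :=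
    HasDerivAt.fun_sum fun i _ => (hasDerivAt_pi.1 hx i).mul (hasDerivAt_pi.1 hPx i)
  refine h.congr_deriv ?_
  rw [Finset.sum_add_distrib, add_mulVec, dotProduct_add, ← mulVec_mulVec, ← mulVec_mulVec,
    dotProduct_mulVec (x t) Aᵀ, vecMul_transpose]
  rfl

/-- The vertex condition: negativity at `A₁` and `A₂` passes to their convex combinations. -/
theorem lyapunov_neg_of_vertices {n : Type*} [Fintype n] {A₁ A₂ P : Matrix n n ℝ}
    (h₁ : (-(A₁ᵀ * P + P * A₁)).PosDef) (h₂ : (-(A₂ᵀ * P + P * A₂)).PosDef)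
    {a b : ℝ} (ha : 0 ≤ a) (hb : 0 ≤ b) (hab : a + b = 1) {v : n → ℝ} (hv : v ≠ 0) :
    v ⬝ᵥ ((a • A₁ + b • A₂)ᵀ * P + P * (a • A₁ + b • A₂)) *ᵥ v < 0 := by
  have e : (a • A₁ + b • A₂)ᵀ * P + P * (a • A₁ + b • A₂)
      = a • (A₁ᵀ * P + P * A₁) + b • (A₂ᵀ * P + P * A₂) := by
    simp only [transpose_add, transpose_smul, add_mul, mul_add, smul_mul, Matrix.mul_smul, smul_add]
    abel
  have q₁ := h₁.dotProduct_mulVec_pos hv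
  have q₂ := h₂.dotProduct_mulVec_pos hv
  simp only [star_trivial, neg_mulVec, dotProduct_neg, Left.neg_pos_iff] at q₁ q₂
  rw [e, add_mulVec, smul_mulVec, smul_mulVec, dotProduct_add, dotProduct_smul, dotProduct_smul]
  exact (convex_Iio (0 : ℝ)) q₁ q₂ ha hb hab

/-- along any trajectory of the uncertain closed-loop system,
the quadratic Lyapunov function xᵀPx is differentiable with derivative
xᵀ(A_cl(K)ᵀP + P A_cl(K))x, which is negative whenever x ≠ 0; hence xᵀPx is
nonincreasing. -/
theorem lyapunov_decreases_along_trajectories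
    (Kδ Kc ω ζ : ℝ)
    (Acl : ℝ → Matrix (Fin 3) (Fin 3) ℝ)
    (hAcl : Acl = fun K =>
      !![0, -K * Kδ, 0;
         0, 0, 1;
         Kc * ω ^ 2, -(ω ^ 2), -(2 * ζ * ω)])
    (K₁ K₂ : ℝ) (hK : K₁ ≤ K₂)
    (P : Matrix (Fin 3) (Fin 3) ℝ)
    (hPsymm : P.IsSymm) (hPpos : P.PosDef)
    (hLMI1 : (-((Acl K₁)ᵀ * P + P * Acl K₁)).PosDef)
    (hLMI2 : (-((Acl K₂)ᵀ * P + P * Acl K₂)).PosDef)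
    (K : ℝ → ℝ) (hKmem : ∀ t, K t ∈ Set.Icc K₁ K₂)
    (x : ℝ → Fin 3 → ℝ) (hx : Differentiable ℝ x)
    (hode : ∀ t, deriv x t = (Acl (K t)).mulVec (x t)) :
    (∀ t : ℝ,
      HasDerivAt (fun s => x s ⬝ᵥ P.mulVec (x s))
        (x t ⬝ᵥ ((Acl (K t))ᵀ * P + P * Acl (K t)).mulVec (x t)) t) ∧
    (∀ t : ℝ, x t ≠ 0 →
      x t ⬝ᵥ ((Acl (K t))ᵀ * P + P * Acl (K t)).mulVec (x t) < 0) ∧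
    Antitone (fun t => x t ⬝ᵥ P.mulVec (x t)) := by
  have hderiv : ∀ t : ℝ, HasDerivAt (fun s => x s ⬝ᵥ P.mulVec (x s))
      (x t ⬝ᵥ ((Acl (K t))ᵀ * P + P * Acl (K t)).mulVec (x t)) t := fun t =>
    hasDerivAt_quadratic (Acl (K t)) P (hode t ▸ (hx t).hasDerivAt)
  have hneg : ∀ t : ℝ, x t ≠ 0 →
      x t ⬝ᵥ ((Acl (K t))ᵀ * P + P * Acl (K t)).mulVec (x t) < 0 := by
    intro t ht
    have hseg := hKmem t
    rw [← segment_eq_Icc hK] at hseg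
    obtain ⟨a, b, ha, hb, hab, hKt⟩ := hseg
    have hA : Acl (K t) = a • Acl K₁ + b • Acl K₂ := by
      obtain rfl : b = 1 - a := by linarith
      rw [← hKt, hAcl]
      ext i j
      fin_cases i <;> fin_cases j <;> simp <;> ring
    rw [hA]
    exact lyapunov_neg_of_vertices hLMI1 hLMI2 ha hb hab ht
  refine ⟨hderiv, hneg, antitone_of_hasDerivAt_nonpos hderiv fun t => ?_⟩
  by_cases ht : x t = 0
  · simp [ht]
  · exact (hneg t ht).le
end
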